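/- Algorithm Revoke-Proportional with parameter λ > 1 is (4λ²+2λ)/(λ−1)-robust for interval selection with proportional weights: for every real λ > 1, every instance, every prediction assignment, and every maximum-weight feasible set OPT, the solution produced by Revoke-Proportional satisfies OPT ≤ ((4λ²+2λ)/(λ−1))·ALG. -/

import Mathlib

attribute [local instance] Classical.propDecidable

noncomputable section

/-- An interval `I = (s, f)` with `s < f`, occupying `[s, f)`. -/
structure Ivl where
  s : ℝ
  f : ℝ
  lt : s < f

namespace Ivl

/-- The set of points occupied by an interval: the half-open set `[s, f)`. -/
def occ (I : Ivl) : Set ℝ := Set.Ico I.s I.f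

/-- The length of an interval, `f - s` (also its proportional weight). -/
def len (I : Ivl) : ℝ := I.f - I.s

end Ivl

/-- Two intervals conflict if their occupied sets intersect. -/
def Conflict (I J : Ivl) : Prop := (I.occ ∩ J.occ).Nonempty

/-- A set of intervals is feasible if its elements are pairwise disjoint. -/
def Feasible (S : Finset Ivl) : Prop :=
  ∀ I ∈ S, ∀ J ∈ S, I ≠ J → ¬ Conflict I J

/-- The total (proportional) weight of a finite set of intervals. -/
def wsum (S : Finset Ivl) : ℝ := ∑ I ∈ S, I.len

/-- `opt` is a maximum-weight feasible subset of the instance's intervals,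
for proportional weights. -/
def IsMaxWeightOpt (inst : List Ivl) (opt : Finset Ivl) : Prop :=
  (∀ I ∈ opt, I ∈ inst) ∧ Feasible opt ∧
    ∀ T : Finset Ivl, (∀ I ∈ T, I ∈ inst) → Feasible T → wsum T ≤ wsum opt

/-- One step of algorithm `Revoke-Proportional` with parameter `lam` upon
the arrival of `I`. -/
def revokePropStep (lam : ℝ) (Prd : Ivl → Bool) (S : Finset Ivl) (I : Ivl) :
    Finset Ivl :=
  let Is := S.filter (fun J => Conflict I J)
  let wc := ∑ J ∈ Is, J.len
  if I.len ≥ lam * wc then  -- main replacement rule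
    insert I (S \ Is)
  else if Prd I = true ∧ I.len ≥ wc ∧ ∀ J ∈ Is, Prd J = false then
    -- predictions rule
    insert I (S \ Is)
  else S

/-- The solution produced by algorithm `Revoke-Proportional` with
parameter `lam` on the instance `inst` with predictions `Prd`. -/
def revokeProp (lam : ℝ) (Prd : Ivl → Bool) (inst : List Ivl) : Finset Ivl :=
  inst.foldl (revokePropStep lam Prd) ∅

/-!
Let `A` be the set of all intervals ever accepted. An interval `I` of the instance is paid for by
the members of `A` in conflict with it: its length is at most `∑ J, min |I| (λ |J|)`. Conversely, a
member `J` of `A` is charged by disjoint intervals; those inside `J` charge at most `|J|` in total,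
and at most two others reach beyond `J`, each charging at most `λ |J|`. Hence a feasible set weighs
at most `(2λ + 1) · w(A)`.

To bound `w(A)`, every accepted interval holds a credit proportional to its length and passes it on
to the interval that revokes it. An interval accepted by the predictions rule is itself predicted,
hence revoked only by the main rule. Of two consecutive revocations at least one thus
multiplies the length by `λ`, and credits of at most `2λ / (λ - 1)` times the length suffice.
-/

open MeasureTheory

namespace Ivl

lemma len_pos (I : Ivl) : 0 < I.len := sub_pos.2 I.lt

lemma volume_real_occ (I : Ivl) : volume.real I.occ = I.len :=
  Real.volume_real_Ico_of_le I.lt.le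

end Ivl

lemma conflict_iff {I J : Ivl} : Conflict I J ↔ I.s < J.f ∧ J.s < I.f := by
  have := I.lt
  have := J.lt
  rw [Conflict, Ivl.occ, Ivl.occ, Set.Ico_inter_Ico, Set.nonempty_Ico, max_lt_iff, lt_min_iff,
    lt_min_iff]
  tauto

lemma conflict_self (I : Ivl) : Conflict I I := conflict_iff.2 ⟨I.lt, I.lt⟩

lemma wsum_mono {S T : Finset Ivl} (h : S ⊆ T) : wsum S ≤ wsum T :=
  Finset.sum_le_sum_of_subset_of_nonneg h fun I _ _ => I.len_pos.le

lemma wsum_union_le (S T : Finset Ivl) : wsum (S ∪ T) ≤ wsum S + wsum T := by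
  have h_inter : 0 ≤ wsum (S ∩ T) := Finset.sum_nonneg fun I _ => I.len_pos.le
  have h_add : wsum (S ∪ T) + wsum (S ∩ T) = wsum S + wsum T := Finset.sum_union_inter
  linarith

/-- The members of `S` in conflict with `I`; the set `I_s` of the algorithm. -/
def conflicting (S : Finset Ivl) (I : Ivl) : Finset Ivl := S.filter (Conflict I)

lemma mem_conflicting {S : Finset Ivl} {I J : Ivl} :
    J ∈ conflicting S I ↔ J ∈ S ∧ Conflict I J := Finset.mem_filter

lemma wsum_conflicting_mono {S T : Finset Ivl} (h : S ⊆ T) (I : Ivl) :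
    wsum (conflicting S I) ≤ wsum (conflicting T I) :=
  wsum_mono (Finset.filter_subset_filter _ h)

lemma len_le_mul_wsum_conflicting_of_mem {lam : ℝ} (hlam : 1 ≤ lam) {S : Finset Ivl} {I : Ivl}
    (h : I ∈ S) : I.len ≤ lam * wsum (conflicting S I) := by
  have h_single : I.len ≤ wsum (conflicting S I) :=
    Finset.single_le_sum (fun J _ => J.len_pos.le) (mem_conflicting.2 ⟨h, conflict_self I⟩)
  exact h_single.trans (le_mul_of_one_le_left (I.len_pos.le.trans h_single) hlam)

namespace Feasible

variable {T : Finset Ivl}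

lemma subset {S : Finset Ivl} (hT : Feasible T) (h : S ⊆ T) : Feasible S :=
  fun I hI J hJ => hT I (h hI) J (h hJ)

lemma wsum_eq_volume_real (hT : Feasible T) : wsum T = volume.real (⋃ I ∈ T, I.occ) := by
  have h_disjoint : Set.PairwiseDisjoint (T : Set Ivl) Ivl.occ := fun I hI J hJ hne =>
    Set.disjoint_iff_inter_eq_empty.2 (Set.not_nonempty_iff_eq_empty.1 (hT I hI J hJ hne))
  rw [measureReal_biUnion_finset h_disjoint (fun _ _ => measurableSet_Ico)
    fun _ _ => measure_Ico_lt_top.ne]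
  exact Finset.sum_congr rfl fun I _ => I.volume_real_occ.symm

lemma wsum_le_len_of_occ_subset (hT : Feasible T) {J : Ivl} (h : ∀ I ∈ T, I.occ ⊆ J.occ) :
    wsum T ≤ J.len := by
  rw [hT.wsum_eq_volume_real, ← J.volume_real_occ]
  exact measureReal_mono (Set.iUnion₂_subset h) measure_Ico_lt_top.ne

lemma card_filter_mem_occ_le_one (hT : Feasible T) (x : ℝ) :
    (T.filter (x ∈ ·.occ)).card ≤ 1 := by
  refine Finset.card_le_one.2 fun I hI J hJ => ?_
  rw [Finset.mem_filter] at hI hJ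
  by_contra hne
  exact hT I hI.1 J hJ.1 hne ⟨x, hI.2, hJ.2⟩

lemma card_filter_conflict_not_subset_le_two (hT : Feasible T) (J : Ivl) :
    (T.filter fun I => Conflict I J ∧ ¬ I.occ ⊆ J.occ).card ≤ 2 := by
  have h_endpoint : (T.filter fun I => Conflict I J ∧ ¬ I.occ ⊆ J.occ) ⊆
      T.filter (J.s ∈ ·.occ) ∪ T.filter (J.f ∈ ·.occ) := by
    intro I hI
    obtain ⟨hIT, h_conflict, h_subset⟩ := Finset.mem_filter.1 hI
    obtain ⟨h_left, h_right⟩ := conflict_iff.1 h_conflict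
    rw [Ivl.occ, Ivl.occ, Set.Ico_subset_Ico_iff I.lt, not_and_or, not_le, not_le] at h_subset
    rw [Finset.mem_union, Finset.mem_filter, Finset.mem_filter]
    exact h_subset.imp (fun h => ⟨hIT, h.le, h_right⟩) (fun h => ⟨hIT, h_left.le, h⟩)
  calc _ ≤ _ := Finset.card_le_card h_endpoint
    _ ≤ _ := Finset.card_union_le _ _
    _ ≤ 1 + 1 := add_le_add (hT.card_filter_mem_occ_le_one _) (hT.card_filter_mem_occ_le_one _)

lemma sum_min_len_le (hT : Feasible T) {lam : ℝ} (hlam : 0 ≤ lam) (J : Ivl) :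
    ∑ I ∈ T with Conflict I J, min I.len (lam * J.len) ≤ (2 * lam + 1) * J.len := by
  have h_inside : ∑ I ∈ T with Conflict I J ∧ I.occ ⊆ J.occ, min I.len (lam * J.len) ≤ J.len :=
    (Finset.sum_le_sum fun I _ => min_le_left I.len _).trans <|
      (hT.subset (Finset.filter_subset _ _)).wsum_le_len_of_occ_subset
        fun I hI => (Finset.mem_filter.1 hI).2.2
  have h_beyond : ∑ I ∈ T with Conflict I J ∧ ¬ I.occ ⊆ J.occ, min I.len (lam * J.len) ≤
      2 * (lam * J.len) := by
    have h_card : ((T.filter fun I => Conflict I J ∧ ¬ I.occ ⊆ J.occ).card : ℝ) ≤ 2 :=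
      mod_cast hT.card_filter_conflict_not_subset_le_two J
    refine (Finset.sum_le_card_nsmul _ _ _ fun I _ => min_le_right I.len _).trans ?_
    rw [nsmul_eq_mul]
    exact mul_le_mul_of_nonneg_right h_card (mul_nonneg hlam J.len_pos.le)
  rw [← Finset.sum_filter_add_sum_filter_not _ (fun I => I.occ ⊆ J.occ), Finset.filter_filter,
    Finset.filter_filter]
  linarith

end Feasible

lemma len_le_sum_conflicting_min {lam : ℝ} (hlam : 0 ≤ lam) {A : Finset Ivl} {I : Ivl}
    (h : I.len ≤ lam * wsum (conflicting A I)) :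
    I.len ≤ ∑ J ∈ conflicting A I, min I.len (lam * J.len) := by
  by_cases h_long : ∃ J ∈ conflicting A I, I.len ≤ lam * J.len
  · obtain ⟨J, hJ, hIJ⟩ := h_long
    calc I.len = min I.len (lam * J.len) := (min_eq_left hIJ).symm
      _ ≤ _ := Finset.single_le_sum (f := fun J => min I.len (lam * J.len))
        (fun K _ => le_min I.len_pos.le (mul_nonneg hlam K.len_pos.le)) hJ
  · push Not at h_long
    calc I.len ≤ ∑ J ∈ conflicting A I, lam * J.len := by rwa [← Finset.mul_sum]
      _ = _ := Finset.sum_congr rfl fun J hJ => (min_eq_right (h_long J hJ).le).symm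

lemma Feasible.wsum_le_mul_wsum {T A : Finset Ivl} (hT : Feasible T) {lam : ℝ} (hlam : 0 ≤ lam)
    (h : ∀ I ∈ T, I.len ≤ lam * wsum (conflicting A I)) :
    wsum T ≤ (2 * lam + 1) * wsum A :=
  calc wsum T ≤ ∑ I ∈ T, ∑ J ∈ conflicting A I, min I.len (lam * J.len) :=
        Finset.sum_le_sum fun I hI => len_le_sum_conflicting_min hlam (h I hI)
    _ = ∑ J ∈ A, ∑ I ∈ T with Conflict I J, min I.len (lam * J.len) :=
        Finset.sum_comm' fun I J => by rw [mem_conflicting, Finset.mem_filter]; tauto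
    _ ≤ ∑ J ∈ A, (2 * lam + 1) * J.len := Finset.sum_le_sum fun J _ => hT.sum_min_len_le hlam J
    _ = (2 * lam + 1) * wsum A := (Finset.mul_sum _ _ _).symm

section RevokeProp

variable {lam : ℝ} {Prd : Ivl → Bool}

/-- The credit held by an interval of the current solution, which has to cover the lengths of all
intervals accepted so far. The factors `a` (not predicted) and `b` (predicted) are the solution of
`a = 1 + b / λ`, for the main rule, and `b = 1 + a`, for the predictions rule. -/
def credit (lam : ℝ) (Prd : Ivl → Bool) (I : Ivl) : ℝ :=
  (if Prd I = true then 2 * lam / (lam - 1) else (lam + 1) / (lam - 1)) * I.len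

lemma credit_of_predicted {I : Ivl} (h : Prd I = true) :
    credit lam Prd I = 2 * lam / (lam - 1) * I.len := by
  rw [credit, if_pos h]

lemma credit_of_not_predicted {I : Ivl} (h : Prd I = false) :
    credit lam Prd I = (lam + 1) / (lam - 1) * I.len := by
  rw [credit, h, if_neg Bool.false_ne_true]

lemma credit_factor_le (hlam : 1 < lam) : (lam + 1) / (lam - 1) ≤ 2 * lam / (lam - 1) :=
  div_le_div_of_nonneg_right (by linarith) (by linarith)

lemma credit_le (hlam : 1 < lam) (I : Ivl) :
    credit lam Prd I ≤ 2 * lam / (lam - 1) * I.len := by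
  refine mul_le_mul_of_nonneg_right ?_ I.len_pos.le
  split_ifs
  exacts [le_rfl, credit_factor_le hlam]

lemma le_credit (hlam : 1 < lam) (I : Ivl) :
    (lam + 1) / (lam - 1) * I.len ≤ credit lam Prd I := by
  refine mul_le_mul_of_nonneg_right ?_ I.len_pos.le
  split_ifs
  exacts [credit_factor_le hlam, le_rfl]

lemma sum_credit_le (hlam : 1 < lam) (S : Finset Ivl) :
    ∑ J ∈ S, credit lam Prd J ≤ 2 * lam / (lam - 1) * wsum S := by
  rw [wsum, Finset.mul_sum]
  exact Finset.sum_le_sum fun J _ => credit_le hlam J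

lemma len_add_sum_credit_le_of_mul_wsum_le (hlam : 1 < lam) {C : Finset Ivl} {I : Ivl}
    (h : lam * wsum C ≤ I.len) :
    I.len + ∑ J ∈ C, credit lam Prd J ≤ credit lam Prd I := by
  have h_pos : 0 < lam - 1 := sub_pos.2 hlam
  calc I.len + ∑ J ∈ C, credit lam Prd J ≤ I.len + 2 * lam / (lam - 1) * wsum C := by
        gcongr; exact sum_credit_le hlam C
    _ = I.len + 2 / (lam - 1) * (lam * wsum C) := by ring
    _ ≤ I.len + 2 / (lam - 1) * I.len := by gcongr
    _ = (lam + 1) / (lam - 1) * I.len := by field_simp; ring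
    _ ≤ credit lam Prd I := le_credit hlam I

lemma len_add_sum_credit_le_of_predicted (hlam : 1 < lam) {C : Finset Ivl} {I : Ivl}
    (hI : Prd I = true) (h : wsum C ≤ I.len) (hC : ∀ J ∈ C, Prd J = false) :
    I.len + ∑ J ∈ C, credit lam Prd J ≤ credit lam Prd I := by
  have h_pos : 0 < lam - 1 := sub_pos.2 hlam
  calc I.len + ∑ J ∈ C, credit lam Prd J = I.len + (lam + 1) / (lam - 1) * wsum C := by
        rw [wsum, Finset.mul_sum,
          Finset.sum_congr rfl fun J hJ => credit_of_not_predicted (hC J hJ)]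
    _ ≤ I.len + (lam + 1) / (lam - 1) * I.len := by gcongr
    _ = 2 * lam / (lam - 1) * I.len := by field_simp; ring
    _ = credit lam Prd I := (credit_of_predicted hI).symm

lemma wsum_insert_sdiff_conflicting_add_sum_le {g : Ivl → ℝ} {S : Finset Ivl} {I : Ivl}
    (h : I.len + ∑ J ∈ conflicting S I, g J ≤ g I) :
    wsum (insert I (S \ conflicting S I) \ S) + ∑ J ∈ S, g J ≤
      ∑ J ∈ insert I (S \ conflicting S I), g J := by
  have h_notMem : I ∉ S \ conflicting S I := fun hI =>
    (Finset.mem_sdiff.1 hI).2 (mem_conflicting.2 ⟨(Finset.mem_sdiff.1 hI).1, conflict_self I⟩)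
  have h_new : wsum (insert I (S \ conflicting S I) \ S) ≤ I.len := by
    refine (wsum_mono (T := {I}) ?_).trans_eq (Finset.sum_singleton _ _)
    grind
  have h_split : ∑ J ∈ S \ conflicting S I, g J + ∑ J ∈ conflicting S I, g J = ∑ J ∈ S, g J :=
    Finset.sum_sdiff (Finset.filter_subset _ _)
  rw [Finset.sum_insert h_notMem]
  linarith

lemma revokePropStep_eq (S : Finset Ivl) (I : Ivl) :
    revokePropStep lam Prd S I =
      if lam * wsum (conflicting S I) ≤ I.len ∨
          Prd I = true ∧ wsum (conflicting S I) ≤ I.len ∧ ∀ J ∈ conflicting S I, Prd J = false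
      then insert I (S \ conflicting S I) else S :=
  (ite_or _ _ _ _).symm

lemma wsum_revokePropStep_sdiff_add_sum_credit_le (hlam : 1 < lam) (S : Finset Ivl) (I : Ivl) :
    wsum (revokePropStep lam Prd S I \ S) + ∑ J ∈ S, credit lam Prd J ≤
      ∑ J ∈ revokePropStep lam Prd S I, credit lam Prd J := by
  rw [revokePropStep_eq]
  split_ifs with h_accept
  · apply wsum_insert_sdiff_conflicting_add_sum_le
    rcases h_accept with h_main | ⟨hI, h_len, h_conflicting⟩
    · exact len_add_sum_credit_le_of_mul_wsum_le hlam h_main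
    · exact len_add_sum_credit_le_of_predicted hlam hI h_len h_conflicting
  · simp [wsum]

lemma len_le_mul_wsum_conflicting_union_revokePropStep (hlam : 1 ≤ lam) (S : Finset Ivl)
    (I : Ivl) :
    I.len ≤ lam * wsum (conflicting (S ∪ revokePropStep lam Prd S I) I) := by
  rw [revokePropStep_eq]
  split_ifs with h_accept
  · exact len_le_mul_wsum_conflicting_of_mem hlam
      (Finset.mem_union_right _ (Finset.mem_insert_self _ _))
  · rw [Finset.union_self]
    exact (not_le.1 (not_or.1 h_accept).1).le

/-- The intervals that the algorithm accepts, whether or not it revokes them later, while it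
processes a list starting from the solution `S`. An interval that arrives again while it is already
part of the solution is not counted as accepted. -/
def acceptedFrom (lam : ℝ) (Prd : Ivl → Bool) : Finset Ivl → List Ivl → Finset Ivl
  | _, [] => ∅
  | S, I :: l =>
    (revokePropStep lam Prd S I \ S) ∪ acceptedFrom lam Prd (revokePropStep lam Prd S I) l

lemma union_acceptedFrom_cons (S : Finset Ivl) (I : Ivl) (l : List Ivl) :
    S ∪ acceptedFrom lam Prd S (I :: l) =
      S ∪ (revokePropStep lam Prd S I ∪ acceptedFrom lam Prd (revokePropStep lam Prd S I) l) := by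
  rw [acceptedFrom, ← Finset.union_assoc, Finset.union_sdiff_self_eq_union, Finset.union_assoc]

lemma wsum_acceptedFrom_add_sum_credit_le (hlam : 1 < lam) (S : Finset Ivl) (l : List Ivl) :
    wsum (acceptedFrom lam Prd S l) + ∑ J ∈ S, credit lam Prd J ≤
      ∑ J ∈ l.foldl (revokePropStep lam Prd) S, credit lam Prd J := by
  induction l generalizing S with
  | nil => simp [acceptedFrom, wsum]
  | cons I l ih =>
    have h_union := wsum_union_le (revokePropStep lam Prd S I \ S)
      (acceptedFrom lam Prd (revokePropStep lam Prd S I) l)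
    have h_step := wsum_revokePropStep_sdiff_add_sum_credit_le (Prd := Prd) hlam S I
    have h_rest := ih (revokePropStep lam Prd S I)
    rw [acceptedFrom, List.foldl_cons]
    linarith

lemma len_le_mul_wsum_conflicting_union_acceptedFrom (hlam : 1 ≤ lam) (S : Finset Ivl)
    {l : List Ivl} {I : Ivl} (hI : I ∈ l) :
    I.len ≤ lam * wsum (conflicting (S ∪ acceptedFrom lam Prd S l) I) := by
  have h_mono {A B : Finset Ivl} (h : A ⊆ B) :
      lam * wsum (conflicting A I) ≤ lam * wsum (conflicting B I) :=
    mul_le_mul_of_nonneg_left (wsum_conflicting_mono h I) (zero_le_one.trans hlam)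
  induction l generalizing S with
  | nil => cases hI
  | cons K l ih =>
    rw [union_acceptedFrom_cons]
    rcases List.mem_cons.1 hI with rfl | hI
    · exact (len_le_mul_wsum_conflicting_union_revokePropStep hlam S I).trans <| h_mono <|
        Finset.union_subset_union_right Finset.subset_union_left
    · exact (ih _ hI).trans (h_mono Finset.subset_union_right)

end RevokeProp

theorem revokeProp_robust_general {lam : ℝ} (hlam : 1 < lam) {inst : List Ivl} (Prd : Ivl → Bool)
    {T : Finset Ivl} (hsub : ∀ I ∈ T, I ∈ inst) (hT : Feasible T) :
    wsum T ≤ ((4 * lam ^ 2 + 2 * lam) / (lam - 1)) * wsum (revokeProp lam Prd inst) := by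
  set A := acceptedFrom lam Prd ∅ inst
  have h_covered (I : Ivl) (hI : I ∈ T) : I.len ≤ lam * wsum (conflicting A I) := by
    simpa only [Finset.empty_union] using
      len_le_mul_wsum_conflicting_union_acceptedFrom (Prd := Prd) hlam.le ∅ (hsub I hI)
  have h_credit : wsum A ≤ ∑ J ∈ revokeProp lam Prd inst, credit lam Prd J := by
    simpa only [Finset.sum_empty, add_zero, revokeProp] using
      wsum_acceptedFrom_add_sum_credit_le (Prd := Prd) hlam ∅ inst
  calc wsum T ≤ (2 * lam + 1) * wsum A := hT.wsum_le_mul_wsum (by linarith) h_covered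
    _ ≤ (2 * lam + 1) * (2 * lam / (lam - 1) * wsum (revokeProp lam Prd inst)) := by
        gcongr
        exact h_credit.trans (sum_credit_le hlam _)
    _ = _ := by ring

theorem revokeProp_robust
    (lam : ℝ) (hlam : 1 < lam)
    (inst : List Ivl) (hdist : inst.Nodup) (Prd : Ivl → Bool)
    (opt : Finset Ivl) (hopt : IsMaxWeightOpt inst opt) :
    wsum opt ≤ ((4 * lam ^ 2 + 2 * lam) / (lam - 1)) *
      wsum (revokeProp lam Prd inst) :=
  revokeProp_robust_general hlam Prd hopt.1 hopt.2.1
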